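/- Let α > 0 and let Y be a positive random variable with EY^{α+δ} < ∞ for some δ > 0, such that P(Y = x₀) > 0 for some x₀ > 0, and suppose E[Y^α 1(Y ≠ x₀)] = x₀^α P(Y = x₀). Then Y is not α-regular variation determining if and only if there exists θ₀ > 0 such that P(log Y ∈ log x₀ + 2πθ₀(2ℤ + 1) | Y ≠ x₀) = 1, i.e. conditionally on Y ≠ x₀, log Y − log x₀ almost surely lies in the set {2πθ₀(2k+1) : k ∈ ℤ}. -/

import Mathlib

/-!
Both directions compare the tails `H x = P(Z > x)` and `K x = P(Y Z > x)`, which are linked by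
`K x = ∫ H (x / y) ν(dy)`.

**Off the odd lattices, `Y` is determining.** Isolate the atom `x₀` in this equation, put `x = e^t`
and divide by `K`. A Potter bound for `K` together with the moment of order `α + δ` justifies
dominated convergence, and the bounded function `r t = H (e^t) / K (e^t)` satisfies
`r t + ∫ r (t - s) m(ds) → 2 a`, where `m` is the law of `log (Y / x₀)` off the atom weighted by
`(Y / x₀) ^ α`; the balance hypothesis says precisely that `m` has mass one. So `w = r - a`
satisfies `w t + ∫ w (t - s) m(ds) → 0`. Monotonicity of `H` bounds the oscillation of `w` from
above, and the equation turns this into a two-sided bound (`two_sided_oscillation`).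

Let `M = limsup |w|` and choose an ultrafilter along which `w → ± M`. The equation and extremality
force `w (t - s) → ∓ M` for every `s` in the support of `m` (`tendsto_comp_sub_of_mem_support`):
each step from the support flips the sign. If `M > 0`, the slow oscillation of `w` keeps sums of an
even number of steps at a positive distance from sums of an odd number of steps, and a subgroup
argument (`exists_odd_lattice`) then puts the support inside `d (2ℤ + 1)` for some `d > 0`.
Excluding this gives `w → 0`, that is, `H ∼ a K`, so `H` is regularly varying.

**On an odd lattice, `Y` is not determining.** With `θ = π / d` the phases `y ^ (iθ)` for `y ≠ x₀`
are opposite to `x₀ ^ (iθ)`, and the balance hypothesis makes them cancel. Hence a variable `Z` with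
tail `x ^ (-α) * (1 + b * sin (θ * log x))`, which is not regularly varying, yields a product with
`x ^ α * P(Y Z > x) → E Y ^ α`.
-/

open MeasureTheory Set Filter ProbabilityTheory
open scoped ENNReal Topology

noncomputable section

/-- Multiplicative convolution of two measures (on `(0,∞)`, modeled as measures on `ℝ`):
`(ν ⊛ ρ)(B) = ∫ ν(x⁻¹ B) ρ(dx)`. -/
def mulConv (ν ρ : Measure ℝ) : Measure ℝ :=
  ρ.bind fun x => ν.map fun y => x * y

/-- The measure `ν_α` on `(0,∞)`, with density `|α| x^{-(α+1)}` w.r.t. Lebesgue measure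
when `α ≠ 0`, and density `x⁻¹` when `α = 0`. -/
def nuAlpha (α : ℝ) : Measure ℝ :=
  (volume.restrict (Ioi (0:ℝ))).withDensity fun x =>
    ENNReal.ofReal (if α = 0 then x⁻¹ else |α| * x ^ (-(α + 1)))

/-- `L` is slowly varying at infinity: `L(cx)/L(x) → 1` as `x → ∞`, for every `c > 0`. -/
def SlowlyVarying (L : ℝ → ℝ) : Prop :=
  ∀ c : ℝ, 0 < c → Tendsto (fun x => L (c * x) / L x) atTop (nhds 1)

/-- The measure `μ` has a regularly varying (right) tail with exponent `α`:
`μ(x,∞) = x^{-α} L(x)` for all `x > 0`, where `L` is slowly varying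
(and eventually positive) at infinity. -/
def HasRegVarTail (μ : Measure ℝ) (α : ℝ) : Prop :=
  ∃ L : ℝ → ℝ, SlowlyVarying L ∧ (∀ᶠ x in atTop, 0 < L x) ∧
    ∀ x : ℝ, 0 < x → μ (Ioi x) = ENNReal.ofReal (x ^ (-α) * L x)

/-- The moment condition `∫₀^∞ (y^{α-δ} ∨ y^{α+δ}) ρ(dy) < ∞`. -/
def MomentCond (ρ : Measure ℝ) (α δ : ℝ) : Prop :=
  ∫⁻ y in Ioi (0:ℝ), ENNReal.ofReal (max (y ^ (α - δ)) (y ^ (α + δ))) ∂ρ < ⊤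

/-- The nonvanishing condition `∫₀^∞ y^{α+iθ} ρ(dy) ≠ 0` for all `θ ∈ ℝ`. -/
def MellinNonvanishing (ρ : Measure ℝ) (α : ℝ) : Prop :=
  ∀ θ : ℝ, (∫ y in Ioi (0:ℝ), (y : ℂ) ^ ((α : ℂ) + (θ : ℂ) * Complex.I) ∂ρ) ≠ 0

/-- `ρ` has the cancellation property with respect to `{ν_α}`: for every σ-finite
measure `ν` on `(0,∞)`, `ν ⊛ ρ = ν_α ⊛ ρ` implies `ν = ν_α`. -/
def HasCancellation (ρ : Measure ℝ) (α : ℝ) : Prop :=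
  ∀ ν : Measure ℝ, SigmaFinite ν → ν (Iic 0) = 0 →
    mulConv ν ρ = mulConv (nuAlpha α) ρ → ν = nuAlpha α

/-- Condition (2.18): `lim_{b↓0} limsup_{x→∞} (∫₀^b ρ(x/y,∞) ν(dy)) / ((ν⊛ρ)(x,∞)) = 0`. -/
def Cond218 (ν ρ : Measure ℝ) : Prop :=
  Tendsto (fun b : ℝ =>
      limsup (fun x : ℝ =>
        (∫⁻ y in Ioc (0:ℝ) b, ρ (Ioi (x / y)) ∂ν).toReal
          / ((mulConv ν ρ) (Ioi x)).toReal) atTop)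
    (nhdsWithin 0 (Ioi 0)) (nhds 0)

/-- A law `ν` on `(0,∞)` (the law of a positive random variable `Y`) is
`α`-regular variation determining: for every random variable `Z` independent of `Y`,
regular variation with exponent `α` of the product `X = Y Z` implies that `Z` is
regularly varying with exponent `α`. -/
def RVDetRV (α : ℝ) (ν : Measure ℝ) : Prop :=
  ∀ (Ω : Type) [MeasurableSpace Ω] (P : Measure Ω) [IsProbabilityMeasure P]
    (Y Z : Ω → ℝ), Measurable Y → Measurable Z → P.map Y = ν →
    IndepFun Y Z P →
    HasRegVarTail (P.map (fun ω => Y ω * Z ω)) α → HasRegVarTail (P.map Z) α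

/-! ### Asymptotic convolution inequalities -/

theorem tendsto_measureReal_Ici_atTop (m : Measure ℝ) [IsFiniteMeasure m] :
    Tendsto (fun t : ℝ => m.real (Ici t)) atTop (𝓝 0) := by
  have h := tendsto_measure_iInter_atTop (μ := m) (s := fun t : ℝ => Ici t)
    (fun t => measurableSet_Ici.nullMeasurableSet) antitone_Ici ⟨0, measure_ne_top _ _⟩
  have he : (⋂ t : ℝ, Ici t) = ∅ := by
    ext x
    simp only [mem_iInter, mem_Ici, mem_empty_iff_false, iff_false, not_forall, not_le]
    exact ⟨x + 1, by linarith⟩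
  rw [he, measure_empty] at h
  exact (ENNReal.tendsto_toReal ENNReal.zero_ne_top).comp h

/-- If `v ≤ c` on `[T, ∞)` and `v (t - ·) ≤ c - ε` on `A`, then `∫ v (t - s) m(ds)` is at most
`c - ε * m A` up to `ε'`. The point is that the threshold for `t` is uniform in `v`, `A` and `ε`. -/
theorem eventually_integral_comp_sub_le (m : Measure ℝ) [IsProbabilityMeasure m]
    (T c B : ℝ) {ε' : ℝ} (hε' : 0 < ε') :
    ∀ᶠ t in atTop, ∀ v : ℝ → ℝ, Measurable v → (∀ u, |v u| ≤ B) → (∀ u, T ≤ u → v u ≤ c) →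
      ∀ A : Set ℝ, MeasurableSet A → ∀ ε : ℝ, (∀ s ∈ A, v (t - s) ≤ c - ε) →
        ∫ s, v (t - s) ∂m ≤ c + ε' - ε * m.real A := by
  have h1 : Tendsto (fun t : ℝ => (|B| + |c|) * m.real (Ici (t - T))) atTop (𝓝 0) := by
    have := ((tendsto_measureReal_Ici_atTop m).comp
      (tendsto_atTop_add_const_right atTop (-T) tendsto_id)).const_mul (|B| + |c|)
    simpa [Function.comp_def, sub_eq_add_neg] using this
  filter_upwards [h1.eventually (gt_mem_nhds hε')] with t ht v hv hB hc A hA ε hAε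
  have hint : Integrable (fun s => v (t - s)) m :=
    Integrable.of_bound (hv.comp (measurable_const.sub measurable_id)).aestronglyMeasurable B
      (ae_of_all _ fun s => hB _)
  have hiA : Integrable (A.indicator fun _ => ε) m := (integrable_const ε).indicator hA
  have hiT : Integrable ((Ici (t - T)).indicator fun _ => |B| + |c|) m :=
    (integrable_const _).indicator measurableSet_Ici
  have hle : ∫ s, v (t - s) ∂m ≤ ∫ s, ((c - A.indicator (fun _ => ε) s)
      + (Ici (t - T)).indicator (fun _ => |B| + |c|) s) ∂m := by
    refine integral_mono hint (((integrable_const c).sub hiA).add hiT) fun s => ?_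
    have hBc : 0 ≤ (Ici (t - T)).indicator (fun _ => |B| + |c|) s :=
      indicator_nonneg (fun _ _ => by positivity) _
    by_cases hs : s ∈ A
    · simp only [indicator_of_mem hs]
      linarith [hAε s hs]
    · simp only [indicator_of_notMem hs]
      by_cases hs' : s ∈ Ici (t - T)
      · simp only [indicator_of_mem hs']
        linarith [hB (t - s), le_abs_self (v (t - s)), le_abs_self B, neg_abs_le c]
      · have : T ≤ t - s := by
          simp only [mem_Ici, not_le] at hs'
          linarith
        linarith [hc _ this]
  have heq : ∫ s, ((c - A.indicator (fun _ => ε) s)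
      + (Ici (t - T)).indicator (fun _ => |B| + |c|) s) ∂m
      = c - ε * m.real A + (|B| + |c|) * m.real (Ici (t - T)) := by
    rw [integral_add (f := fun s => c - A.indicator (fun _ => ε) s)
      ((integrable_const c).sub hiA) hiT, integral_sub (integrable_const c) hiA,
      integral_indicator hA, integral_indicator measurableSet_Ici]
    simp [mul_comm]
  linarith

/-- An asymptotic upper bound on the increments of `w` becomes a two-sided one: by the convolution
equation, the increments of `w` are minus averages of increments of `w`, up to `o(1)`. -/
theorem two_sided_oscillation (m : Measure ℝ) [IsProbabilityMeasure m] (w : ℝ → ℝ)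
    (hw : Measurable w) (B : ℝ) (hB : ∀ u, |w u| ≤ B)
    (hconv : Tendsto (fun t => w t + ∫ s, w (t - s) ∂m) atTop (𝓝 0))
    (hosc : ∀ ε > 0, ∃ η > 0, ∀ᶠ t in atTop, ∀ h, 0 ≤ h → h ≤ η → w (t + h) - w t ≤ ε) :
    ∀ ε > 0, ∃ η > 0, ∀ᶠ t in atTop, ∀ h, 0 ≤ h → h ≤ η → |w (t + h) - w t| ≤ ε := by
  intro ε hε
  obtain ⟨η, hη, hup⟩ := hosc (ε / 4) (by positivity)
  refine ⟨η, hη, ?_⟩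
  obtain ⟨T, hT⟩ := eventually_atTop.1 hup
  obtain ⟨T', hT'⟩ := eventually_atTop.1
    (Metric.tendsto_nhds.1 hconv (ε / 4) (by positivity))
  filter_upwards [hup, eventually_ge_atTop T',
    eventually_integral_comp_sub_le m T (ε / 4) (2 * B) (show 0 < ε / 4 by positivity)]
    with t ht1 ht2 ht3 h h0 hh
  have hint : ∀ t, Integrable (fun s => w (t - s)) m := fun t =>
    Integrable.of_bound (hw.comp (measurable_const.sub measurable_id)).aestronglyMeasurable B
      (ae_of_all _ fun s => hB _)
  have h3 := ht3 (fun u => w (u + h) - w u)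
    ((hw.comp (measurable_id.add measurable_const)).sub hw)
    (fun u => (abs_sub _ _).trans (by linarith [hB (u + h), hB u]))
    (fun u hu => hT u hu h h0 hh) ∅ MeasurableSet.empty 0 (by simp)
  have h4 : ∫ s, (w (t - s + h) - w (t - s)) ∂m
      = ∫ s, w (t + h - s) ∂m - ∫ s, w (t - s) ∂m := by
    rw [← integral_sub (hint _) (hint _)]
    congr 1; ext s; congr 2; ring
  rw [h4] at h3
  have h5 := hT' t ht2
  have h6 := hT' (t + h) (by linarith)
  rw [Real.dist_eq, sub_zero, abs_lt] at h5 h6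
  rw [abs_le]
  constructor
  · linarith [h5.1, h5.2, h6.1, h6.2]
  · linarith [ht1 h h0 hh]

/-- If averages of translates of `v` approach an asymptotic upper bound `M` of `v` along `F`, then
so does each translate by a point of the support of `m`: being below `M - ε` at `t - s` would, by
slow oscillation, lower `v (t - ·)` on a whole ball around `s`, which has positive mass. -/
theorem tendsto_comp_sub_of_mem_support (m : Measure ℝ) [IsProbabilityMeasure m] (v : ℝ → ℝ)
    (hv : Measurable v) (B : ℝ) (hB : ∀ u, |v u| ≤ B)
    (hosc : ∀ ε > 0, ∃ η > 0, ∀ᶠ t in atTop, ∀ h, 0 ≤ h → h ≤ η → |v (t + h) - v t| ≤ ε)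
    {M : ℝ} (hM : ∀ ε > 0, ∀ᶠ t in atTop, v t ≤ M + ε)
    {F : Filter ℝ} (hF : F ≤ atTop) (hint : Tendsto (fun t => ∫ s, v (t - s) ∂m) F (𝓝 M))
    {s : ℝ} (hs : s ∈ m.support) : Tendsto (fun t => v (t - s)) F (𝓝 M) := by
  have hshift : ∀ a : ℝ, Tendsto (fun t : ℝ => t + a) atTop atTop := fun a =>
    tendsto_atTop_add_const_right atTop a tendsto_id
  rw [Metric.tendsto_nhds]
  intro ε hε
  have hupper : ∀ᶠ t in F, v (t - s) ≤ M + ε / 2 :=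
    hF ((hshift (-s)).eventually (hM (ε / 2) (by positivity)))
  obtain ⟨η, hη, hη'⟩ := hosc (ε / 4) (by positivity)
  set A := Metric.closedBall s η with hA
  have hβ : 0 < m.real A := ENNReal.toReal_pos
    (((Measure.mem_support_iff_forall s).1 hs _ (Metric.closedBall_mem_nhds s hη)).ne')
    (measure_ne_top _ _)
  set β := m.real A with hβdef
  obtain ⟨T, hT⟩ := eventually_atTop.1 (hM (ε * β / 16) (by positivity))
  have hlow := Metric.tendsto_nhds.1 hint (ε * β / 16) (by positivity)
  filter_upwards [hupper, hlow, hF ((hshift (-s)).eventually hη'),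
    hF ((hshift (-s - η)).eventually (eventually_forall_ge_atTop.2 hη')),
    hF (eventually_integral_comp_sub_le m T (M + ε * β / 16) B
      (show 0 < ε * β / 16 by positivity))] with t h1 h2 h3 h4 h5
  rw [Real.dist_eq, abs_lt]
  refine ⟨?_, by linarith⟩
  by_contra! hcon
  have h6 := h5 v hv hB hT A measurableSet_closedBall (ε / 2) ?_
  · rw [Real.dist_eq, abs_lt] at h2
    nlinarith [h2.1]
  · intro s' hs'
    rw [hA, Metric.mem_closedBall, Real.dist_eq, abs_le] at hs'
    have hclose : |v (t - s') - v (t - s)| ≤ ε / 4 := by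
      rcases le_total s' s with hss | hss
      · have := h3 (s - s') (by linarith) (by linarith)
        rwa [show t + -s + (s - s') = t - s' by ring, ← sub_eq_add_neg] at this
      · have := h4 (t - s') (by linarith) (s' - s) (by linarith) (by linarith)
        rwa [show t - s' + (s' - s) = t - s by ring, abs_sub_comm] at this
    have hpos : 0 ≤ ε * β := by positivity
    linarith [(abs_le.1 hclose).2]

/-! ### The sign-flipping argument -/

/-- If `0` is at positive distance from `S + G`, where `G` is the group generated by the sums of two
elements of `S` (so that `S + G` consists of the integer combinations of odd total weight), then
`S` lies in an odd lattice. -/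
theorem exists_odd_lattice (S : Set ℝ) (hS : S.Nonempty)
    (hgap : ∃ η > 0, ∀ s ∈ S, ∀ g ∈ AddSubgroup.closure (image2 (· + ·) S S), η < |s + g|) :
    ∃ d : ℝ, 0 < d ∧ ∀ s ∈ S, ∃ k : ℤ, s = d * (2 * k + 1) := by
  obtain ⟨η, hη, hgap⟩ := hgap
  set G := AddSubgroup.closure (image2 (· + ·) S S) with hG
  obtain ⟨s₁, hs₁⟩ := hS
  have hadd : ∀ a ∈ S, ∀ b ∈ S, a + b ∈ G := fun a ha b hb =>
    AddSubgroup.subset_closure (mem_image2_of_mem ha hb)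
  have hnot : ∀ s ∈ S, s ∉ G := fun s hs hsG => by
    have := hgap s hs (-s) (G.neg_mem hsG)
    simp at this
    linarith
  rcases G.dense_or_cyclic with hd | ⟨a, ha⟩
  · obtain ⟨g, hg, hgG⟩ := hd.exists_dist_lt (-s₁) hη
    have := hgap s₁ hs₁ g hg
    rw [Real.dist_eq, abs_sub_comm, show g - -s₁ = s₁ + g by ring] at hgG
    linarith
  · have hmem : ∀ x, x ∈ G ↔ ∃ n : ℤ, n * a = x := fun x => by
      rw [ha, AddSubgroup.mem_closure_singleton]
      simp
    obtain ⟨n, hn⟩ := (hmem _).1 (hadd s₁ hs₁ s₁ hs₁)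
    have hodd : Odd n := by
      by_contra hne
      obtain ⟨j, rfl⟩ := Int.not_odd_iff_even.1 hne
      refine hnot s₁ hs₁ ((hmem _).2 ⟨j, ?_⟩)
      push_cast at hn
      linarith
    have ha0 : a ≠ 0 := by
      rintro rfl
      refine hnot s₁ hs₁ ((hmem _).2 ⟨0, ?_⟩)
      simp at hn ⊢
      linarith
    obtain ⟨j, rfl⟩ := hodd
    have key : ∀ s ∈ S, ∃ k : ℤ, s = a / 2 * (2 * k + 1) := fun s hs => by
      obtain ⟨l, hl⟩ := (hmem _).1 (hadd s hs s₁ hs₁)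
      refine ⟨l - j - 1, ?_⟩
      push_cast at hn ⊢
      linarith
    rcases lt_or_gt_of_ne ha0 with hneg | hpos
    · refine ⟨-a / 2, by linarith, fun s hs => ?_⟩
      obtain ⟨k, rfl⟩ := key s hs
      refine ⟨-k - 1, ?_⟩
      push_cast
      ring
    · exact ⟨a / 2, by linarith, key⟩

theorem mem_closure_eq_sub (E : Set ℝ) {g : ℝ} (hg : g ∈ AddSubgroup.closure E) :
    ∃ e ∈ AddSubmonoid.closure E, ∃ e' ∈ AddSubmonoid.closure E, g = e - e' := by
  induction hg using AddSubgroup.closure_induction with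
  | mem x hx => exact ⟨x, AddSubmonoid.subset_closure hx, 0, zero_mem _, by simp⟩
  | zero => exact ⟨0, zero_mem _, 0, zero_mem _, by simp⟩
  | add x y _ _ hx hy =>
    obtain ⟨a, ha, b, hb, rfl⟩ := hx
    obtain ⟨c, hc, d, hd, rfl⟩ := hy
    exact ⟨a + c, add_mem ha hc, b + d, add_mem hb hd, by ring⟩
  | neg x _ hx =>
    obtain ⟨a, ha, b, hb, rfl⟩ := hx
    exact ⟨b, hb, a, ha, by ring⟩

/-- Bounded asymptotic solutions of `w + m ∗ w = 0` that oscillate slowly from above tend to zero,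
unless `m` is carried by an odd lattice. -/
theorem tendsto_zero_of_not_odd_lattice (m : Measure ℝ) [IsProbabilityMeasure m] (w : ℝ → ℝ)
    (hw : Measurable w) (B : ℝ) (hB : ∀ u, |w u| ≤ B)
    (hconv : Tendsto (fun t => w t + ∫ s, w (t - s) ∂m) atTop (𝓝 0))
    (hosc : ∀ ε > 0, ∃ η > 0, ∀ᶠ t in atTop, ∀ h, 0 ≤ h → h ≤ η → w (t + h) - w t ≤ ε)
    (hlat : ∀ d : ℝ, 0 < d → m {s | ∀ k : ℤ, s ≠ d * (2 * k + 1)} ≠ 0) :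
    Tendsto w atTop (𝓝 0) := by
  have hosc2 := two_sided_oscillation m w hw B hB hconv hosc
  by_contra hnot
  have hbdd : IsBoundedUnder (· ≤ ·) atTop (fun t => |w t|) :=
    isBoundedUnder_of ⟨B, hB⟩
  have hcobdd : IsCoboundedUnder (· ≤ ·) atTop (fun t => |w t|) :=
    IsBoundedUnder.isCoboundedUnder_le (isBoundedUnder_of ⟨0, fun t => abs_nonneg _⟩)
  set M := limsup (fun t => |w t|) atTop with hMdef
  have hupper : ∀ ε > 0, ∀ᶠ t in atTop, |w t| ≤ M + ε := fun ε hε =>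
    (eventually_lt_of_limsup_lt (show M < M + ε by linarith) hbdd).mono fun t ht => ht.le
  have hMpos : 0 < M := by
    by_contra! hM0
    refine hnot (Metric.tendsto_nhds.2 fun ε hε => ?_)
    filter_upwards [hupper (ε / 2) (by positivity)] with t ht
    rw [Real.dist_eq, sub_zero]
    linarith
  have hcl : MapClusterPt M atTop (fun t => |w t|) := by
    rw [Metric.nhds_basis_ball.mapClusterPt_iff_frequently]
    intro ε hε
    refine ((frequently_lt_of_lt_limsup hcobdd (show M - ε < M by linarith)).and_eventually
      (hupper (ε / 2) (by positivity))).mono fun t ht => ?_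
    rw [Metric.mem_ball, Real.dist_eq, abs_lt]
    constructor <;> linarith [ht.1, ht.2]
  obtain ⟨U, hU, hUM⟩ := mapClusterPt_iff_ultrafilter.1 hcl
  -- `P σ τ`: along `U`, the translate of `w` by `τ` tends to the extreme value `σ M`.
  set P : ℝ → ℝ → Prop := fun σ τ => Tendsto (fun t => w (t - τ)) U (𝓝 (σ * M)) with hP
  have hstart : ∃ σ : ℝ, (σ = 1 ∨ σ = -1) ∧ P σ 0 := by
    have hdich : ∀ᶠ t in (U : Filter ℝ), 0 ≤ w t ∨ w t ≤ 0 :=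
      Eventually.of_forall fun t => le_total _ _
    rcases Ultrafilter.eventually_or.1 hdich with h | h
    · refine ⟨1, Or.inl rfl, ?_⟩
      simp only [hP, sub_zero, one_mul]
      exact hUM.congr' (h.mono fun t ht => abs_of_nonneg ht)
    · refine ⟨-1, Or.inr rfl, ?_⟩
      simp only [hP, sub_zero, neg_mul, one_mul]
      exact hUM.neg.congr' (h.mono fun t ht => by simp [abs_of_nonpos ht])
  have hstep : ∀ σ τ, (σ = 1 ∨ σ = -1) → P σ τ → ∀ s ∈ m.support, P (-σ) (τ + s) := by
    intro σ τ hσ hPστ s hs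
    have hshift : Tendsto (fun t : ℝ => t - τ) U atTop :=
      (tendsto_atTop_add_const_right atTop (-τ) tendsto_id).mono_left hU
    have hσ2 : σ * σ = 1 := by rcases hσ with rfl | rfl <;> norm_num
    have hσa : |σ| = 1 := by rcases hσ with rfl | rfl <;> norm_num
    -- The function `-σ w` has upper limit at most `M` and attains it along `U - τ`.
    have hmain := tendsto_comp_sub_of_mem_support m (fun u => -σ * w u)
      (hw.const_mul _) B (fun u => by rw [abs_mul, abs_neg, hσa, one_mul]; exact hB u)
      (fun ε hε => by
        obtain ⟨η, hη, h⟩ := hosc2 ε hε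
        refine ⟨η, hη, h.mono fun t ht h h0 h1 => ?_⟩
        rw [← mul_sub, abs_mul, abs_neg, hσa, one_mul]
        exact ht h h0 h1)
      (M := M) (fun ε hε => (hupper ε hε).mono fun t ht => by
        refine (le_abs_self _).trans ?_
        rw [abs_mul, abs_neg, hσa, one_mul]
        exact ht)
      (F := map (fun t : ℝ => t - τ) U) hshift ?_ hs
    · have h2 := (tendsto_map'_iff.1 hmain).const_mul (-σ)
      simp only [hP]
      refine h2.congr fun t => ?_
      simp only [Function.comp]
      rw [← mul_assoc, neg_mul_neg, hσ2, one_mul]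
      congr 1; ring
    · rw [tendsto_map'_iff]
      have h1 := ((hconv.comp hshift).sub hPστ).const_mul (-σ)
      have hval : -σ * (0 - σ * M) = M := by linear_combination M * hσ2
      rw [hval] at h1
      refine h1.congr fun t => ?_
      simp only [Function.comp]
      rw [integral_const_mul]
      ring
  obtain ⟨σ, hσ, hσ0⟩ := hstart
  have heven : ∀ e ∈ AddSubmonoid.closure (image2 (· + ·) m.support m.support), P σ e := by
    intro e he
    have : ∀ τ, P σ τ → P σ (τ + e) := by
      induction he using AddSubmonoid.closure_induction with
      | mem x hx =>
        obtain ⟨a, ha, b, hb, rfl⟩ := hx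
        intro τ hτ
        have h1 := hstep σ τ hσ hτ a ha
        have h2 := hstep (-σ) (τ + a) (by rcases hσ with rfl | rfl <;> simp) h1 b hb
        rwa [neg_neg, add_assoc] at h2
      | zero => intro τ hτ; rwa [add_zero]
      | add x y _ _ hx hy => intro τ hτ; rw [← add_assoc]; exact hy _ (hx _ hτ)
    simpa using this 0 hσ0
  have hgap : ∃ η > 0, ∀ s ∈ m.support,
      ∀ g ∈ AddSubgroup.closure (image2 (· + ·) m.support m.support), η < |s + g| := by
    obtain ⟨η, hη, hη'⟩ := hosc2 M hMpos
    refine ⟨η, hη, fun s hs g hg => ?_⟩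
    by_contra! hcon
    obtain ⟨e, he, e', he', rfl⟩ := mem_closure_eq_sub _ hg
    have hodd := hstep σ e hσ (heven e he) s hs
    have hdiff : Tendsto (fun t => |w (t - e') - w (t - (e + s))|) U (𝓝 (2 * M)) := by
      have := ((heven e' he').sub hodd).abs
      have hv : |σ * M - -σ * M| = 2 * M := by
        rw [show σ * M - -σ * M = σ * (2 * M) by ring, abs_mul, abs_of_pos (by linarith : 0 < 2 * M)]
        rcases hσ with rfl | rfl <;> simp
      rwa [hv] at this
    have hle : ∀ᶠ t in (U : Filter ℝ), |w (t - e') - w (t - (e + s))| ≤ M := by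
      have hsh : ∀ a : ℝ, Tendsto (fun t : ℝ => t - a) U atTop := fun a =>
        (tendsto_atTop_add_const_right atTop (-a) tendsto_id).mono_left hU
      rw [abs_le] at hcon
      rcases le_total e' (e + s) with hc | hc
      · filter_upwards [(hsh (e + s)).eventually hη'] with t ht
        have := ht (e + s - e') (by linarith) (by linarith)
        rwa [show t - (e + s) + (e + s - e') = t - e' by ring] at this
      · filter_upwards [(hsh e').eventually hη'] with t ht
        have := ht (e' - (e + s)) (by linarith) (by linarith)
        rwa [show t - e' + (e' - (e + s)) = t - (e + s) by ring, abs_sub_comm] at this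
    linarith [le_of_tendsto hdiff hle]
  have hne : m.support.Nonempty := by
    rw [nonempty_iff_ne_empty]
    intro h0
    have := Measure.measure_compl_support (μ := m)
    rw [h0, compl_empty, measure_univ] at this
    exact one_ne_zero this
  obtain ⟨d, hd, hdk⟩ := exists_odd_lattice m.support hne hgap
  -- The support is conull, so `m` itself is carried by the lattice.
  refine hlat d hd (measure_mono_null (fun s hs => ?_) (Measure.measure_compl_support (μ := m)))
  intro hsm
  obtain ⟨k, hk⟩ := hdk s hsm
  exact hs k hk

/-! ### Regularly varying tails and products -/

theorem antitone_measureReal_Ioi (μ : Measure ℝ) [IsFiniteMeasure μ] :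
    Antitone fun x => μ.real (Ioi x) :=
  fun _ _ h => measureReal_mono (Ioi_subset_Ioi h)

/-- Regular variation of a tail in terms of ratios. Positivity holds everywhere because the tail is
monotone. -/
theorem hasRegVarTail_iff (μ : Measure ℝ) [IsProbabilityMeasure μ] (α : ℝ) :
    HasRegVarTail μ α ↔ (∀ x, 0 < μ.real (Ioi x)) ∧
      ∀ c, 0 < c → Tendsto (fun x => μ.real (Ioi (c * x)) / μ.real (Ioi x)) atTop
        (𝓝 (c ^ (-α))) := by
  constructor
  · rintro ⟨L, hL, hpos, hμ⟩
    have hval : ∀ᶠ x in atTop, μ.real (Ioi x) = x ^ (-α) * L x ∧ 0 < L x ∧ 0 < x := by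
      filter_upwards [hpos, eventually_gt_atTop 0] with x hx hx0
      refine ⟨?_, hx, hx0⟩
      rw [Measure.real, hμ x hx0, ENNReal.toReal_ofReal (by positivity)]
    refine ⟨fun x => ?_, fun c hc => ?_⟩
    · obtain ⟨y, ⟨hy1, hy2, hy3⟩, hxy⟩ := (hval.and (eventually_ge_atTop x)).exists
      refine lt_of_lt_of_le ?_ (antitone_measureReal_Ioi μ hxy)
      simp only [hy1]
      positivity
    · have h1 := (hL c hc).const_mul (c ^ (-α))
      rw [mul_one] at h1
      refine h1.congr' ?_
      filter_upwards [hval, (tendsto_id.const_mul_atTop hc).eventually hval] with x hx hcx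
      simp only [id] at hcx
      rw [hx.1, hcx.1, Real.mul_rpow hc.le hx.2.2.le]
      have := (Real.rpow_pos_of_pos hx.2.2 (-α)).ne'
      have := hx.2.1.ne'
      field_simp
  · rintro ⟨hpos, hlim⟩
    refine ⟨fun x => x ^ α * μ.real (Ioi x), fun c hc => ?_, ?_, fun x hx => ?_⟩
    · have h1 := (hlim c hc).const_mul (c ^ α)
      rw [← Real.rpow_add hc, add_neg_cancel, Real.rpow_zero] at h1
      refine h1.congr' ?_
      filter_upwards [eventually_gt_atTop 0] with x hx
      rw [Real.mul_rpow hc.le hx.le]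
      have := (Real.rpow_pos_of_pos hx α).ne'
      have := (hpos x).ne'
      field_simp
    · filter_upwards [eventually_gt_atTop 0] with x hx
      have := hpos x
      positivity
    · rw [← mul_assoc, ← Real.rpow_add hx, neg_add_cancel, Real.rpow_zero, one_mul,
        ofReal_measureReal]

theorem measureReal_Ioi_map_mul {Ω : Type*} [MeasurableSpace Ω] (P : Measure Ω)
    [IsProbabilityMeasure P] (Y Z : Ω → ℝ) (hY : Measurable Y) (hZ : Measurable Z)
    (hind : IndepFun Y Z P) (hsupp : P.map Y (Iic 0) = 0) (x : ℝ) :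
    (P.map fun ω => Y ω * Z ω).real (Ioi x) = ∫ y, (P.map Z).real (Ioi (x / y)) ∂(P.map Y) := by
  have hmZ : IsProbabilityMeasure (P.map Z) := Measure.isProbabilityMeasure_map hZ.aemeasurable
  have hmY : IsProbabilityMeasure (P.map Y) := Measure.isProbabilityMeasure_map hY.aemeasurable
  have hmul : Measurable fun q : ℝ × ℝ => q.1 * q.2 := measurable_fst.mul measurable_snd
  have h1 : (P.map fun ω => Y ω * Z ω)
      = ((P.map Y).prod (P.map Z)).map fun q : ℝ × ℝ => q.1 * q.2 := by
    rw [← (indepFun_iff_map_prod_eq_prod_map_map hY.aemeasurable hZ.aemeasurable).1 hind,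
      Measure.map_map hmul (hY.prodMk hZ)]
    rfl
  rw [Measure.real, h1, Measure.map_apply hmul measurableSet_Ioi,
    Measure.prod_apply (hmul measurableSet_Ioi)]
  have hae : ∀ᵐ y ∂(P.map Y), 0 < y := by
    rw [ae_iff]
    simpa [Iic] using hsupp
  rw [integral_eq_lintegral_of_nonneg_ae (ae_of_all _ fun _ => measureReal_nonneg)]
  · congr 1
    refine lintegral_congr_ae (hae.mono fun y hy => ?_)
    beta_reduce
    rw [ofReal_measureReal]
    congr 1
    ext z
    simp only [mem_preimage, mem_Ioi]
    rw [div_lt_iff₀ hy, mul_comm]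
  · exact ((antitone_measureReal_Ioi (P.map Z)).measurable.comp
      (measurable_const.div measurable_id)).aestronglyMeasurable

/-- A Potter-type bound for a regularly varying monotone function, valid on the whole half-line. -/
theorem exists_potter_bound (K : ℝ → ℝ) (hK : Antitone K) (hK0 : ∀ x, 0 < K x)
    (hK1 : ∀ x, K x ≤ 1) (α β : ℝ) (hβ0 : 0 < β) (hβ : α < β)
    (hlim : ∀ c, 0 < c → Tendsto (fun x => K (c * x) / K x) atTop (𝓝 (c ^ (-α)))) :
    ∃ C, 0 < C ∧ ∀ x, 0 < x → ∀ y, 0 < y → K (x / y) ≤ C * (1 + y ^ β) * K x := by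
  have hhalf : ∀ᶠ x in atTop, K (2⁻¹ * x) ≤ 2 ^ β * K x := by
    have hlt : (2⁻¹ : ℝ) ^ (-α) < 2 ^ β := by
      rw [Real.inv_rpow (by norm_num), Real.rpow_neg (by norm_num), inv_inv]
      exact Real.rpow_lt_rpow_of_exponent_lt (by norm_num) hβ
    filter_upwards [(hlim 2⁻¹ (by norm_num)).eventually (gt_mem_nhds hlt)] with x hx
    exact ((div_lt_iff₀ (hK0 x)).1 hx).le
  obtain ⟨M, hM⟩ := eventually_atTop.1 hhalf
  have hB : (1 : ℝ) ≤ 2 ^ β := Real.one_le_rpow (by norm_num) hβ0.le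
  have hA : 0 < (K M)⁻¹ := inv_pos.2 (hK0 M)
  have hiter : ∀ n : ℕ, ∀ x, K (x / 2 ^ n) ≤ (K M)⁻¹ * (2 ^ β) ^ n * K x := by
    intro n
    induction n with
    | zero =>
      intro x
      have : 1 ≤ (K M)⁻¹ := (one_le_inv₀ (hK0 M)).2 (hK1 M)
      simp only [pow_zero, div_one, mul_one]
      nlinarith [hK0 x]
    | succ n ih =>
      intro x
      rcases le_or_gt M x with hx | hx
      · have h1 := ih (2⁻¹ * x)
        have h2 := hM x hx
        calc K (x / 2 ^ (n + 1)) = K (2⁻¹ * x / 2 ^ n) := by congr 1; rw [pow_succ]; field_simp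
          _ ≤ (K M)⁻¹ * (2 ^ β) ^ n * K (2⁻¹ * x) := h1
          _ ≤ (K M)⁻¹ * (2 ^ β) ^ n * (2 ^ β * K x) := by gcongr
          _ = _ := by ring
      · have h1 : 1 ≤ (K M)⁻¹ * K x := by
          rw [inv_mul_eq_div, one_le_div (hK0 M)]
          exact hK hx.le
        have h2 : (1 : ℝ) ≤ (2 ^ β) ^ (n + 1) := one_le_pow₀ hB
        calc K (x / 2 ^ (n + 1)) ≤ 1 := hK1 _
          _ ≤ ((K M)⁻¹ * K x) * (2 ^ β) ^ (n + 1) := one_le_mul_of_one_le_of_one_le h1 h2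
          _ = _ := by ring
  refine ⟨(K M)⁻¹ * 2 ^ β, by positivity, fun x hx y hy => ?_⟩
  have hKx := hK0 x
  have hyβ : 0 ≤ y ^ β := by positivity
  rcases le_or_gt y 1 with hy1 | hy1
  · have h0 : K (x / y) ≤ K x := hK ((le_div_iff₀ hy).2 (by nlinarith))
    have h1 : 1 ≤ (K M)⁻¹ := (one_le_inv₀ (hK0 M)).2 (hK1 M)
    have h2 : 1 ≤ (K M)⁻¹ * 2 ^ β * (1 + y ^ β) :=
      one_le_mul_of_one_le_of_one_le (one_le_mul_of_one_le_of_one_le h1 hB) (by linarith)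
    nlinarith
  · obtain ⟨n, hn1, hn2⟩ := exists_nat_pow_near hy1.le (show (1 : ℝ) < 2 by norm_num)
    have hpow : ((2 : ℝ) ^ β) ^ (n + 1) ≤ 2 ^ β * y ^ β := by
      rw [pow_succ, mul_comm, ← Real.rpow_natCast (2 ^ β) n, ← Real.rpow_mul (by norm_num),
        mul_comm β, Real.rpow_mul (by norm_num), Real.rpow_natCast]
      gcongr
    calc K (x / y) ≤ K (x / 2 ^ (n + 1)) := hK (by gcongr)
      _ ≤ (K M)⁻¹ * (2 ^ β) ^ (n + 1) * K x := hiter _ _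
      _ ≤ (K M)⁻¹ * (2 ^ β * y ^ β) * K x := by gcongr
      _ ≤ (K M)⁻¹ * 2 ^ β * (1 + y ^ β) * K x := by
        have : 0 ≤ (K M)⁻¹ * 2 ^ β := by positivity
        nlinarith [mul_nonneg this hKx.le]

/-! ### Off the odd lattices -/

/-- The tails `H` of `Z` and `K` of `Y Z` are asymptotically proportional; the hypotheses retain only
what is needed of the two tails. -/
theorem tendsto_ratio_of_not_odd_lattice
    (α : ℝ) (hα : 0 < α) (ν : Measure ℝ) [IsProbabilityMeasure ν] (hsupp : ν (Iic 0) = 0)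
    (hmom : ∃ δ : ℝ, 0 < δ ∧ ∫⁻ y in Ioi (0:ℝ), ENNReal.ofReal (y ^ (α + δ)) ∂ν < ⊤)
    (x₀ : ℝ) (hx₀ : 0 < x₀) (hatom : 0 < ν {x₀})
    (heq : ∫⁻ y in Ioi (0:ℝ) \ {x₀}, ENNReal.ofReal (y ^ α) ∂ν
        = ν {x₀} * ENNReal.ofReal (x₀ ^ α))
    (hlat : ∀ d : ℝ, 0 < d →
      ν {y : ℝ | y ≠ x₀ ∧ ∀ k : ℤ, Real.log y - Real.log x₀ ≠ d * (2 * k + 1)} ≠ 0)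
    (H K : ℝ → ℝ) (hH : Antitone H) (hK : Antitone K) (hH0 : ∀ x, 0 ≤ H x) (hH1 : ∀ x, H x ≤ 1)
    (hK0 : ∀ x, 0 < K x) (hK1 : ∀ x, K x ≤ 1) (hHK : ∀ x, K x = ∫ y, H (x / y) ∂ν)
    (hlim : ∀ c, 0 < c → Tendsto (fun x => K (c * x) / K x) atTop (𝓝 (c ^ (-α)))) :
    ∃ a, 0 < a ∧ Tendsto (fun x => H x / K x) atTop (𝓝 a) := by
  obtain ⟨δ, hδ, hmom⟩ := hmom
  set β := α + δ with hβdef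
  have hβ0 : 0 < β := by positivity
  obtain ⟨C, hC, hpotter⟩ := exists_potter_bound K hK hK0 hK1 α β hβ0 (by linarith) hlim
  set p := ν.real {x₀} with hp
  have hp0 : 0 < p := ENNReal.toReal_pos hatom.ne' (measure_ne_top _ _)
  set D := Ioi (0:ℝ) \ {x₀} with hD
  have hDm : MeasurableSet D := measurableSet_Ioi.diff (measurableSet_singleton _)
  set ν' := ν.restrict D with hν'
  have hpos' : ∀ᵐ y ∂ν', 0 < y := by
    filter_upwards [ae_restrict_mem hDm] with y hy using hy.1
  have hHmeas : ∀ x, Measurable fun y => H (x / y) := fun x =>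
    hH.measurable.comp (measurable_const.div measurable_id)
  have hHint : ∀ x, Integrable (fun y => H (x / y)) ν := fun x =>
    Integrable.of_bound (hHmeas x).aestronglyMeasurable 1
      (ae_of_all _ fun y => by rw [Real.norm_eq_abs, abs_of_nonneg (hH0 _)]; exact hH1 _)
  -- Isolating the atom in the renewal-type equation.
  have hsplit : ∀ x, K x = p * H (x / x₀) + ∫ y, H (x / y) ∂ν' := by
    intro x
    have hae : ({x₀}ᶜ : Set ℝ) =ᵐ[ν] D := by
      have : ∀ᵐ y ∂ν, 0 < y := by
        rw [ae_iff]
        simpa [Iic] using hsupp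
      filter_upwards [this] with y hy
      refine propext ⟨fun h => ⟨hy, h⟩, fun h => h.2⟩
    rw [hHK x, ← integral_add_compl (measurableSet_singleton x₀) (hHint x),
      integral_singleton, smul_eq_mul, setIntegral_congr_set hae]
  -- The ratio of the tails is bounded.
  set r : ℝ → ℝ := fun t => H (Real.exp t) / K (Real.exp t) with hr
  have hrm : Measurable r :=
    (hH.measurable.comp Real.measurable_exp).div (hK.measurable.comp Real.measurable_exp)
  have hr0 : ∀ t, 0 ≤ r t := fun t => div_nonneg (hH0 _) (hK0 _).le
  set R := C * (1 + (1 / x₀) ^ β) / p with hR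
  have hR0 : 0 ≤ R := by positivity
  have hrR : ∀ t, r t ≤ R := by
    intro t
    have h1 := hsplit (Real.exp t / (1 / x₀))
    have h2 : 0 ≤ ∫ y, H (Real.exp t / (1 / x₀) / y) ∂ν' := integral_nonneg fun y => hH0 _
    have h3 := hpotter (Real.exp t) (Real.exp_pos t) (1 / x₀) (by positivity)
    rw [show Real.exp t / (1 / x₀) / x₀ = Real.exp t by field_simp] at h1
    simp only [hr, hR]
    rw [div_le_div_iff₀ (hK0 _) hp0]
    linarith
  -- The law of `log (Y / x₀)` off the atom, weighted by `(Y / x₀) ^ α`.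
  set s : ℝ → ℝ := fun y => Real.log y - Real.log x₀ with hs
  have hsm : Measurable s := Real.measurable_log.sub measurable_const
  have hexp : ∀ t y, 0 < y → Real.exp (t - s y) = Real.exp t / (y / x₀) := by
    intro t y hy
    rw [Real.exp_sub, hs]
    simp only
    rw [Real.exp_sub, Real.exp_log hy, Real.exp_log hx₀]
  set q := 1 / (p * x₀ ^ α) with hq
  have hq0 : 0 < q := by positivity
  have hdm : Measurable fun y : ℝ => ENNReal.ofReal (q * y ^ α) := by fun_prop
  set m := (ν'.withDensity fun y => ENNReal.ofReal (q * y ^ α)).map s with hm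
  have hmprob : IsProbabilityMeasure m := by
    refine ⟨?_⟩
    rw [hm, Measure.map_apply hsm MeasurableSet.univ, preimage_univ,
      withDensity_apply _ MeasurableSet.univ, Measure.restrict_univ]
    simp only [ENNReal.ofReal_mul hq0.le]
    rw [lintegral_const_mul _ (by fun_prop), heq, ← ofReal_measureReal, ← ENNReal.ofReal_mul
      measureReal_nonneg, ← ENNReal.ofReal_mul hq0.le, ← hp, hq, one_div,
      inv_mul_cancel₀ (by positivity), ENNReal.ofReal_one]
  have hmint : ∀ f : ℝ → ℝ, Measurable f → ∫ u, f u ∂m = ∫ y, q * y ^ α * f (s y) ∂ν' := by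
    intro f hf
    rw [hm, integral_map hsm.aemeasurable hf.aestronglyMeasurable,
      integral_withDensity_eq_integral_toReal_smul hdm (ae_of_all _ fun _ => ENNReal.ofReal_lt_top)]
    refine integral_congr_ae (hpos'.mono fun y hy => ?_)
    simp only [smul_eq_mul]
    rw [ENNReal.toReal_ofReal (by positivity)]
  have hmlat : ∀ d : ℝ, 0 < d → m {s | ∀ k : ℤ, s ≠ d * (2 * k + 1)} ≠ 0 := by
    intro d hd h0
    refine hlat d hd ?_
    have hset : MeasurableSet {s : ℝ | ∀ k : ℤ, s ≠ d * (2 * k + 1)} := by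
      have : {s : ℝ | ∀ k : ℤ, s ≠ d * (2 * k + 1)} = ⋂ k : ℤ, {d * (2 * (k : ℝ) + 1)}ᶜ := by
        ext; simp
      rw [this]
      exact MeasurableSet.iInter fun k => (measurableSet_singleton _).compl
    rw [hm, Measure.map_apply hsm hset, withDensity_apply_eq_zero hdm, hν',
      Measure.restrict_apply' hDm] at h0
    refine measure_mono_null (fun y hy => ?_) (measure_union_null h0 hsupp)
    rcases le_or_gt y 0 with h | h
    · exact Or.inr h
    · refine Or.inl ⟨⟨?_, hy.2⟩, h, hy.1⟩
      simp only [mem_ofPred_eq, ne_eq, ENNReal.ofReal_eq_zero, not_le]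
      positivity
  -- The integral of `y ^ β`, hence the dominating function.
  have hβint : Integrable (fun y : ℝ => y ^ β) ν' := by
    refine ⟨by fun_prop, ?_⟩
    rw [hasFiniteIntegral_iff_ofReal (hpos'.mono fun y hy => by positivity)]
    exact (lintegral_mono' (Measure.restrict_mono sdiff_subset le_rfl) le_rfl).trans_lt hmom
  have hαβ : ∀ y : ℝ, 0 < y → y ^ α ≤ 1 + y ^ β := by
    intro y hy
    rcases le_or_gt y 1 with h | h
    · have h1 := Real.rpow_le_one hy.le h hα.le
      have h2 : 0 ≤ y ^ β := by positivity
      linarith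
    · have := Real.rpow_le_rpow_of_exponent_le h.le (show α ≤ β by linarith)
      linarith
  have hαint : Integrable (fun y : ℝ => y ^ α) ν' := by
    refine ((integrable_const (1:ℝ)).add hβint).mono' (by fun_prop) (hpos'.mono fun y hy => ?_)
    rw [Real.norm_eq_abs, abs_of_nonneg (by positivity)]
    exact hαβ y hy
  -- Replacing `K (x₀ x / y) / K x` by its limit `(y / x₀) ^ α` costs `o(1)`.
  set E : ℝ → ℝ → ℝ := fun t y => r (t - s y) *
    (K (Real.exp t / (y / x₀)) / K (Real.exp t) - (y / x₀) ^ α) with hE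
  have hEm : ∀ t, Measurable (E t) := fun t => by
    refine (hrm.comp (measurable_const.sub hsm)).mul (Measurable.sub (Measurable.div
      (hK.measurable.comp ?_) measurable_const) ?_) <;> fun_prop
  have hEb : ∀ t, ∀ᵐ y ∂ν', ‖E t y‖ ≤ R * ((C + 1) * (1 + (1 / x₀) ^ β * y ^ β)) := by
    intro t
    filter_upwards [hpos'] with y hy
    have hu : 0 < y / x₀ := by positivity
    have h1 : K (Real.exp t / (y / x₀)) / K (Real.exp t) ≤ C * (1 + (y / x₀) ^ β) := by
      rw [div_le_iff₀ (hK0 _)]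
      exact hpotter _ (Real.exp_pos t) _ hu
    have h2 : 0 ≤ K (Real.exp t / (y / x₀)) / K (Real.exp t) :=
      div_nonneg (hK0 _).le (hK0 _).le
    have h3 := hαβ _ hu
    have h4 : 0 ≤ (y / x₀) ^ α := by positivity
    rw [← Real.mul_rpow (by positivity) hy.le, one_div_mul_eq_div, hE, norm_mul,
      Real.norm_eq_abs, Real.norm_eq_abs, abs_of_nonneg (hr0 _)]
    refine mul_le_mul (hrR _) ?_ (abs_nonneg _) hR0
    rw [abs_le]
    have h5 : 0 ≤ C * (1 + (y / x₀) ^ β) := by positivity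
    constructor <;> linarith
  have hElim : Tendsto (fun t => ∫ y, E t y ∂ν') atTop (𝓝 0) := by
    have := tendsto_integral_filter_of_dominated_convergence (μ := ν') (F := E) (f := fun _ => 0)
      (l := atTop) (fun y => R * ((C + 1) * (1 + (1 / x₀) ^ β * y ^ β)))
      (Eventually.of_forall fun t => (hEm t).aestronglyMeasurable)
      (Eventually.of_forall hEb)
      ((((integrable_const (1:ℝ)).add (hβint.const_mul _)).const_mul _).const_mul _) ?_
    · simpa using this
    · filter_upwards [hpos'] with y hy
      have hu : 0 < y / x₀ := by positivity
      have h1 := (hlim (y / x₀)⁻¹ (by positivity)).comp Real.tendsto_exp_atTop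
      rw [Real.inv_rpow hu.le, Real.rpow_neg hu.le, inv_inv] at h1
      have h2 := (h1.sub_const ((y / x₀) ^ α))
      rw [sub_self] at h2
      refine bdd_le_mul_tendsto_zero' R (Eventually.of_forall fun t => ?_) (h2.congr fun t => ?_)
      · rw [abs_of_nonneg (hr0 _)]
        exact hrR _
      · simp only [Function.comp]
        rw [inv_mul_eq_div]
  have hEint : ∀ t, Integrable (E t) ν' := fun t =>
    ((((integrable_const (1:ℝ)).add (hβint.const_mul _)).const_mul _).const_mul _).mono'
      (hEm t).aestronglyMeasurable (hEb t)
  -- The renewal-type equation divided by `p * K (e^t)`.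
  have hmain : ∀ t, r t + ∫ u, r (t - u) ∂m
      = K (x₀ * Real.exp t) / K (Real.exp t) / p - (∫ y, E t y ∂ν') / p := by
    intro t
    have hKt := (hK0 (Real.exp t)).ne'
    have hGint : Integrable (fun y => q * y ^ α * r (t - s y)) ν' := by
      refine ((hαint.const_mul q).mul_const R).mono' ?_ (hpos'.mono fun y hy => ?_)
      · exact Measurable.aestronglyMeasurable
          ((by fun_prop : Measurable fun y : ℝ => q * y ^ α).mul
            (hrm.comp (measurable_const.sub hsm)))
      · rw [norm_mul, Real.norm_eq_abs, Real.norm_eq_abs, abs_of_nonneg (hr0 _),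
          abs_of_nonneg (by positivity)]
        exact mul_le_mul_of_nonneg_left (hrR _) (by positivity)
    have h1 : (∫ y, H (x₀ * Real.exp t / y) ∂ν') / (K (Real.exp t) * p)
        = ∫ y, (E t y / p + q * y ^ α * r (t - s y)) ∂ν' := by
      rw [← integral_div]
      refine integral_congr_ae (hpos'.mono fun y hy => ?_)
      have hxy : x₀ * Real.exp t / y = Real.exp t / (y / x₀) := by field_simp
      have hKu := (hK0 (Real.exp t / (y / x₀))).ne'
      simp only [hE, hr, hxy, hexp t y hy, hq]
      rw [Real.div_rpow hy.le hx₀.le]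
      have : x₀ ^ α ≠ 0 := by positivity
      generalize K (Real.exp t / (y / x₀)) = k at hKu ⊢
      generalize H (Real.exp t / (y / x₀)) = h
      field_simp
      ring
    rw [integral_add ((hEint t).div_const p) hGint, integral_div] at h1
    have h2 := hsplit (x₀ * Real.exp t)
    rw [mul_div_cancel_left₀ _ hx₀.ne'] at h2
    rw [hmint (fun u => r (t - u)) (hrm.comp (measurable_const.sub measurable_id))]
    have h3 : ∫ y, q * y ^ α * r (t - s y) ∂ν'
        = (∫ y, H (x₀ * Real.exp t / y) ∂ν') / (K (Real.exp t) * p) - (∫ y, E t y ∂ν') / p := by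
      linarith
    rw [h3, h2]
    simp only [hr]
    field_simp
    ring
  -- The constant solution of the limiting equation `r + m ∗ r = x₀ ^ (-α) / p`.
  set a := x₀ ^ (-α) / p / 2 with ha
  have ha0 : 0 < a := by positivity
  refine ⟨a, ha0, ?_⟩
  have hfin := tendsto_zero_of_not_odd_lattice m (fun t => r t - a)
    (hrm.sub measurable_const) (R + a) (fun u => ?_) ?_ ?_ hmlat
  · have h1 := (hfin.comp Real.tendsto_log_atTop).add_const a
    rw [zero_add] at h1
    refine h1.congr' ?_
    filter_upwards [eventually_gt_atTop 0] with x hx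
    simp [hr, Real.exp_log hx]
  · rw [abs_le]
    constructor <;> linarith [hr0 u, hrR u]
  · have h1 := (((hlim x₀ hx₀).comp Real.tendsto_exp_atTop).div_const p).sub (hElim.div_const p)
    have h2 := h1.sub_const (2 * a)
    rw [show x₀ ^ (-α) / p - 0 / p - 2 * a = 0 by rw [ha]; ring] at h2
    refine h2.congr fun t => ?_
    have hrint : Integrable (fun u => r (t - u)) m :=
      Integrable.of_bound (hrm.comp (measurable_const.sub measurable_id)).aestronglyMeasurable R
        (ae_of_all _ fun u => by rw [Real.norm_eq_abs, abs_of_nonneg (hr0 _)]; exact hrR _)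
    rw [integral_sub hrint (integrable_const _)]
    simp only [Function.comp, integral_const, probReal_univ, one_smul]
    linarith [hmain t]
  -- `H` decreases and `K` varies regularly, so `r (t + h) ≤ r t * (e^(α η) + o(1))` for `h ≤ η`.
  · intro ε hε
    have hcont : Tendsto (fun η : ℝ => R * (Real.exp (α * η) - 1)) (𝓝[>] 0) (𝓝 0) := by
      have : Continuous fun η : ℝ => R * (Real.exp (α * η) - 1) := by fun_prop
      have := this.tendsto 0
      simp only [mul_zero, Real.exp_zero, sub_self] at this
      exact this.mono_left nhdsWithin_le_nhds
    obtain ⟨η, hη1, hη2⟩ := ((hcont.eventually (gt_mem_nhds hε)).and self_mem_nhdsWithin).exists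
    refine ⟨η, hη2, ?_⟩
    have h1 := (hlim (Real.exp η) (Real.exp_pos η)).comp Real.tendsto_exp_atTop
    have h2 := ((h1.inv₀ (by positivity)).sub_const 1).const_mul R
    have h3 : ((Real.exp η) ^ (-α))⁻¹ = Real.exp (α * η) := by
      rw [Real.rpow_neg (Real.exp_pos η).le, inv_inv, ← Real.exp_mul, mul_comm]
    rw [h3] at h2
    filter_upwards [h2.eventually (gt_mem_nhds hη1)] with t ht h h0 hh
    simp only [Function.comp, inv_div] at ht
    rw [mul_comm (Real.exp η), ← Real.exp_add] at ht
    have hKη := hK0 (Real.exp (t + η))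
    have h4 : r (t + h) ≤ r t * (K (Real.exp t) / K (Real.exp (t + η))) := by
      have : r t * (K (Real.exp t) / K (Real.exp (t + η)))
          = H (Real.exp t) / K (Real.exp (t + η)) := by
        have := (hK0 (Real.exp t)).ne'
        simp only [hr]
        field_simp
      rw [this]
      refine div_le_div₀ (hH0 _) (hH (Real.exp_le_exp.2 (by linarith))) hKη
        (hK (Real.exp_le_exp.2 (by linarith)))
    have h5 : 0 ≤ K (Real.exp t) / K (Real.exp (t + η)) - 1 := by
      rw [sub_nonneg, one_le_div hKη]
      exact hK (Real.exp_le_exp.2 (by linarith [show (0:ℝ) < η from hη2]))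
    have h6 := mul_le_mul_of_nonneg_right (hrR t) h5
    linarith

/-- The analytic half: off the odd lattices, `Y` is `α`-regular variation determining. -/
theorem rvDetRV_of_not_odd_lattice
    (α : ℝ) (hα : 0 < α) (ν : Measure ℝ) [IsProbabilityMeasure ν] (hsupp : ν (Iic 0) = 0)
    (hmom : ∃ δ : ℝ, 0 < δ ∧ ∫⁻ y in Ioi (0:ℝ), ENNReal.ofReal (y ^ (α + δ)) ∂ν < ⊤)
    (x₀ : ℝ) (hx₀ : 0 < x₀) (hatom : 0 < ν {x₀})
    (heq : ∫⁻ y in Ioi (0:ℝ) \ {x₀}, ENNReal.ofReal (y ^ α) ∂ν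
        = ν {x₀} * ENNReal.ofReal (x₀ ^ α))
    (hlat : ∀ d : ℝ, 0 < d →
      ν {y : ℝ | y ≠ x₀ ∧ ∀ k : ℤ, Real.log y - Real.log x₀ ≠ d * (2 * k + 1)} ≠ 0) :
    RVDetRV α ν := by
  intro Ω _ P _ Y Z hY hZ hPY hind hX
  have hmZ : IsProbabilityMeasure (P.map Z) := Measure.isProbabilityMeasure_map hZ.aemeasurable
  have hmX : IsProbabilityMeasure (P.map fun ω => Y ω * Z ω) :=
    Measure.isProbabilityMeasure_map (hY.mul hZ).aemeasurable
  obtain ⟨hK0, hlim⟩ := (hasRegVarTail_iff _ α).1 hX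
  set K : ℝ → ℝ := fun x => (P.map fun ω => Y ω * Z ω).real (Ioi x) with hK
  set H : ℝ → ℝ := fun x => (P.map Z).real (Ioi x) with hH
  have hHanti : Antitone H := antitone_measureReal_Ioi _
  obtain ⟨a, ha, hratio⟩ := tendsto_ratio_of_not_odd_lattice α hα ν hsupp hmom x₀ hx₀ hatom heq
    hlat H K hHanti (antitone_measureReal_Ioi _)
    (fun _ => measureReal_nonneg) (fun _ => measureReal_le_one) hK0 (fun _ => measureReal_le_one)
    (fun x => by rw [← hPY]; exact measureReal_Ioi_map_mul P Y Z hY hZ hind (hPY ▸ hsupp) x) hlim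
  have hHpos : ∀ x, 0 < H x := by
    intro x
    obtain ⟨y, hy, hxy⟩ := ((hratio.eventually (lt_mem_nhds ha)).and (eventually_ge_atTop x)).exists
    refine lt_of_lt_of_le ?_ (hHanti hxy)
    by_contra! hneg
    have := div_nonpos_of_nonpos_of_nonneg hneg (hK0 y).le
    linarith
  refine (hasRegVarTail_iff _ α).2 ⟨hHpos, fun c hc => ?_⟩
  have h1 := ((hratio.comp (tendsto_id.const_mul_atTop hc)).mul (hlim c hc)).div hratio ha.ne'
  rw [mul_comm, mul_div_cancel_right₀ _ ha.ne'] at h1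
  refine h1.congr fun x => ?_
  have hx : K x ≠ 0 := (hK0 x).ne'
  have hcx : K (c * x) ≠ 0 := (hK0 (c * x)).ne'
  have hHx := (hHpos x).ne'
  simp only [Function.comp, id, Pi.div_apply]
  change H (c * x) / K (c * x) * (K (c * x) / K x) / (H x / K x) = H (c * x) / H x
  field_simp

/-! ### On an odd lattice -/

/-- A law on `(1, ∞)` whose tail `x ^ (-α) * (1 + b * sin (θ * log x))` oscillates
log-periodically. -/
theorem exists_oscillating_law (α θ : ℝ) (hα : 0 < α) (hθ : 0 < θ) :
    ∃ b : ℝ, 0 < b ∧ b < 1 ∧ ∃ μ : Measure ℝ, IsProbabilityMeasure μ ∧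
      (∀ x, 1 ≤ x → μ.real (Ioi x) = x ^ (-α) * (1 + b * Real.sin (θ * Real.log x))) ∧
      ∀ x, x ≤ 1 → μ.real (Ioi x) = 1 := by
  -- With this `b`, the tail decreases: its derivative is at most `-(α / 2) * x ^ (-α - 1)`.
  set b := α / (2 * (α + θ)) with hb
  have hb0 : 0 < b := by positivity
  have hbα : b * (α + θ) = α / 2 := by rw [hb]; field_simp
  have hb1 : b < 1 := by
    rw [hb, div_lt_one (by positivity)]
    linarith
  set h : ℝ → ℝ := fun x => x ^ (-α) * (1 + b * Real.sin (θ * Real.log x)) with hh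
  set g : ℝ → ℝ := fun x => x ^ (-α - 1) *
    (α * (1 + b * Real.sin (θ * Real.log x)) - b * θ * Real.cos (θ * Real.log x)) with hg
  have hderiv : ∀ x, 0 < x → HasDerivAt (fun x => -h x) (g x) x := by
    intro x hx
    have h1 := Real.hasDerivAt_rpow_const (p := -α) (Or.inl hx.ne')
    have h2 := (((Real.hasDerivAt_log hx.ne').const_mul θ).sin.const_mul b).const_add 1
    refine (h1.mul h2).neg.congr_deriv ?_
    simp only [hg]
    have : x ^ (-α) = x ^ (-α - 1) * x := by
      rw [← Real.rpow_add_one hx.ne']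
      congr 1
      ring
    rw [this]
    field_simp
    ring
  have hg0 : ∀ x, 0 < x → 0 ≤ g x := by
    intro x hx
    refine mul_nonneg (by positivity) ?_
    have hs := Real.neg_one_le_sin (θ * Real.log x)
    have hc := Real.cos_le_one (θ * Real.log x)
    have h1 : α * b * (-1) ≤ α * b * Real.sin (θ * Real.log x) := by gcongr
    have h2 : b * θ * Real.cos (θ * Real.log x) ≤ b * θ * 1 := by gcongr
    nlinarith
  have hlim : Tendsto (fun x => -h x) atTop (𝓝 0) := by
    rw [← neg_zero]
    refine Tendsto.neg ?_
    have h1 := tendsto_rpow_neg_atTop hα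
    refine (bdd_le_mul_tendsto_zero' 2 (Eventually.of_forall fun x => ?_) h1).congr
      fun x => mul_comm _ _
    have hs := Real.neg_one_le_sin (θ * Real.log x)
    have hs' := Real.sin_le_one (θ * Real.log x)
    rw [abs_le]
    constructor <;> nlinarith
  have htail : ∀ x, 1 ≤ x → ∫⁻ u in Ioi x, ENNReal.ofReal (g u) = ENNReal.ofReal (h x) := by
    intro x hx
    have hx0 : 0 < x := by linarith
    have hcont : ContinuousWithinAt (fun x => -h x) (Ici x) x :=
      (hderiv x hx0).continuousAt.continuousWithinAt
    have hd : ∀ u ∈ Ioi x, HasDerivAt (fun x => -h x) (g u) u := fun u hu =>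
      hderiv u (hx0.trans hu)
    have hp : ∀ u ∈ Ioi x, 0 ≤ g u := fun u hu => hg0 u (hx0.trans hu)
    rw [← ofReal_integral_eq_lintegral_ofReal (integrableOn_Ioi_deriv_of_nonneg hcont hd hp hlim)
      ((ae_restrict_mem measurableSet_Ioi).mono hp),
      integral_Ioi_of_hasDerivAt_of_nonneg hcont hd hp hlim]
    simp
  set μ := (volume.restrict (Ioi (1:ℝ))).withDensity fun u => ENNReal.ofReal (g u) with hμ
  have hμIoi : ∀ x, μ (Ioi x) = ENNReal.ofReal (h (max x 1)) := by
    intro x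
    rw [hμ, withDensity_apply _ measurableSet_Ioi, Measure.restrict_restrict measurableSet_Ioi,
      Ioi_inter_Ioi, htail _ (le_max_right _ _)]
  have hh1 : h 1 = 1 := by simp [hh]
  refine ⟨b, hb0, hb1, μ, ⟨?_⟩, fun x hx => ?_, fun x hx => ?_⟩
  · rw [hμ, withDensity_apply _ MeasurableSet.univ, Measure.restrict_univ, htail 1 le_rfl, hh1,
      ENNReal.ofReal_one]
  · rw [Measure.real, hμIoi, max_eq_left hx, ENNReal.toReal_ofReal]
    refine mul_nonneg (by positivity) ?_
    nlinarith [Real.neg_one_le_sin (θ * Real.log x)]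
  · rw [Measure.real, hμIoi, max_eq_right hx, hh1, ENNReal.toReal_ofReal zero_le_one]

theorem not_hasRegVarTail_of_oscillating (α θ b : ℝ) (hθ : 0 < θ) (hb0 : 0 < b)
    (μ : Measure ℝ) [IsProbabilityMeasure μ]
    (hμ : ∀ x, 1 ≤ x → μ.real (Ioi x) = x ^ (-α) * (1 + b * Real.sin (θ * Real.log x))) :
    ¬ HasRegVarTail μ α := by
  intro hrv
  have hc := Real.exp_pos (Real.pi / θ)
  have hlim := ((hasRegVarTail_iff μ α).1 hrv).2 _ hc
  -- Points at which the oscillating factor is maximal, and minimal half a period later.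
  set x : ℕ → ℝ := fun n => Real.exp ((Real.pi / 2 + n * (2 * Real.pi)) / θ) with hx
  have hxlim : Tendsto x atTop atTop := by
    refine Real.tendsto_exp_atTop.comp (Tendsto.atTop_div_const hθ
      (tendsto_atTop_add_const_left _ _ (tendsto_natCast_atTop_atTop.atTop_mul_const ?_)))
    positivity
  have hconst := hlim.comp hxlim
  have hval : ∀ n, μ.real (Ioi (Real.exp (Real.pi / θ) * x n)) / μ.real (Ioi (x n))
      = Real.exp (Real.pi / θ) ^ (-α) * ((1 - b) / (1 + b)) := by
    intro n
    have hpi := Real.pi_pos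
    have hx1 : 1 ≤ x n := Real.one_le_exp (by positivity)
    have hcx1 : 1 ≤ Real.exp (Real.pi / θ) * x n :=
      one_le_mul_of_one_le_of_one_le (Real.one_le_exp (by positivity)) hx1
    have hx0 : 0 < x n := by linarith
    have hlx : θ * Real.log (x n) = Real.pi / 2 + n * (2 * Real.pi) := by
      simp only [hx, Real.log_exp]
      field_simp
    have hlcx : θ * Real.log (Real.exp (Real.pi / θ) * x n)
        = Real.pi / 2 + n * (2 * Real.pi) + Real.pi := by
      rw [Real.log_mul hc.ne' hx0.ne', Real.log_exp, mul_add, hlx]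
      field_simp
      ring
    rw [hμ _ hx1, hμ _ hcx1, hlx, hlcx, Real.sin_add_pi, Real.sin_add_nat_mul_two_pi,
      Real.sin_pi_div_two, Real.mul_rpow hc.le hx0.le]
    have := (Real.rpow_pos_of_pos hx0 (-α)).ne'
    field_simp
    ring
  have heq := tendsto_nhds_unique (hconst.congr hval) tendsto_const_nhds
  have hcα := Real.rpow_pos_of_pos hc (-α)
  have h1 : (1 - b) / (1 + b) = 1 := by
    have := mul_left_cancel₀ hcα.ne' (heq.symm.trans (mul_one _).symm)
    exact this
  rw [div_eq_one_iff_eq (by positivity)] at h1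
  linarith

/-- The converse half: on an odd lattice, the Mellin transform `E[Y ^ (α + iθ)]` vanishes for
`θ = π / d`, so the oscillation of the tail of `Z` is invisible in the tail of `Y Z`. -/
theorem not_rvDetRV_of_odd_lattice
    (α : ℝ) (hα : 0 < α) (ν : Measure ℝ) [IsProbabilityMeasure ν] (hsupp : ν (Iic 0) = 0)
    (hmom : ∃ δ : ℝ, 0 < δ ∧ ∫⁻ y in Ioi (0:ℝ), ENNReal.ofReal (y ^ (α + δ)) ∂ν < ⊤)
    (x₀ : ℝ) (hx₀ : 0 < x₀)
    (heq : ∫⁻ y in Ioi (0:ℝ) \ {x₀}, ENNReal.ofReal (y ^ α) ∂ν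
        = ν {x₀} * ENNReal.ofReal (x₀ ^ α))
    (d : ℝ) (hd : 0 < d)
    (hlat : ν {y : ℝ | y ≠ x₀ ∧ ∀ k : ℤ, Real.log y - Real.log x₀ ≠ d * (2 * k + 1)} = 0) :
    ¬ RVDetRV α ν := by
  set θ := Real.pi / d with hθdef
  have hθ : 0 < θ := div_pos Real.pi_pos hd
  obtain ⟨b, hb0, hb1, μ, hμprob, hμ1, hμ2⟩ := exists_oscillating_law α θ hα hθ
  intro hdet
  have hYmap : (ν.prod μ).map Prod.fst = ν := by simp
  have hZmap : (ν.prod μ).map Prod.snd = μ := by simp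
  have hind : IndepFun (Prod.fst : ℝ × ℝ → ℝ) Prod.snd (ν.prod μ) := by
    rw [indepFun_iff_map_prod_eq_prod_map_map measurable_fst.aemeasurable
      measurable_snd.aemeasurable, hYmap, hZmap]
    exact Measure.map_id
  refine not_hasRegVarTail_of_oscillating α θ b hθ hb0 μ hμ1 (hZmap ▸
    hdet (ℝ × ℝ) (ν.prod μ) Prod.fst Prod.snd measurable_fst measurable_snd hYmap hind ?_)
  have hX : IsProbabilityMeasure ((ν.prod μ).map fun ω : ℝ × ℝ => ω.1 * ω.2) :=
    Measure.isProbabilityMeasure_map (measurable_fst.mul measurable_snd).aemeasurable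
  set K : ℝ → ℝ := fun x => ((ν.prod μ).map fun ω : ℝ × ℝ => ω.1 * ω.2).real (Ioi x) with hK
  set H : ℝ → ℝ := fun x => μ.real (Ioi x) with hH
  have hKH : ∀ x, K x = ∫ y, H (x / y) ∂ν := by
    intro x
    have := measureReal_Ioi_map_mul (ν.prod μ) Prod.fst Prod.snd measurable_fst measurable_snd
      hind (by rwa [hYmap]) x
    rwa [hYmap, hZmap] at this
  have hpos : ∀ᵐ y ∂ν, 0 < y := by
    rw [ae_iff]
    simpa [Iic] using hsupp
  have hαint : Integrable (fun y : ℝ => y ^ α) ν := by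
    obtain ⟨δ, hδ, hmom⟩ := hmom
    have hβint : Integrable (fun y : ℝ => y ^ (α + δ)) ν := by
      refine ⟨by fun_prop, ?_⟩
      rw [hasFiniteIntegral_iff_ofReal (hpos.mono fun y hy => by positivity)]
      rwa [Measure.restrict_eq_self_of_ae_mem (s := Ioi (0:ℝ)) hpos] at hmom
    refine ((integrable_const (1:ℝ)).add hβint).mono' (by fun_prop) (hpos.mono fun y hy => ?_)
    rw [Real.norm_eq_abs, abs_of_nonneg (by positivity), Pi.add_apply]
    rcases le_or_gt y 1 with h | h
    · have h1 := Real.rpow_le_one hy.le h hα.le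
      have h2 : 0 ≤ y ^ (α + δ) := by positivity
      linarith
    · have := Real.rpow_le_rpow_of_exponent_le h.le (show α ≤ α + δ by linarith)
      linarith
  set S : ℝ → ℝ → ℝ := fun x y => y ^ α * (b * Real.sin (θ * (Real.log x - Real.log y))) with hS
  have hSm : ∀ x, Measurable (S x) := fun x => by
    simp only [hS]
    fun_prop
  have hSb : ∀ x y, 0 < y → |S x y| ≤ y ^ α := by
    intro x y hy
    have h1 := Real.abs_sin_le_one (θ * (Real.log x - Real.log y))
    simp only [hS, abs_mul, abs_of_pos hb0, abs_of_pos (Real.rpow_pos_of_pos hy α)]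
    have h2 : b * |Real.sin (θ * (Real.log x - Real.log y))| ≤ 1 := by
      nlinarith [abs_nonneg (Real.sin (θ * (Real.log x - Real.log y)))]
    exact mul_le_of_le_one_right (by positivity) h2
  have hSint : ∀ x, Integrable (S x) ν := fun x =>
    hαint.mono' (hSm x).aestronglyMeasurable (hpos.mono fun y hy => hSb x y hy)
  -- The atom at `x₀` and the odd lattice contribute opposite phases of equal weight.
  have hSzero : ∀ x, ∫ y, S x y ∂ν = 0 := by
    intro x
    have hae : ({x₀}ᶜ : Set ℝ) =ᵐ[ν] (Ioi (0:ℝ) \ {x₀} : Set ℝ) := by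
      filter_upwards [hpos] with y hy
      refine propext ⟨fun h => ⟨hy, h⟩, fun h => h.2⟩
    have hDm : MeasurableSet (Ioi (0:ℝ) \ {x₀}) :=
      measurableSet_Ioi.diff (measurableSet_singleton _)
    have hmass : ∫ y in Ioi (0:ℝ) \ {x₀}, y ^ α ∂ν = ν.real {x₀} * x₀ ^ α := by
      rw [integral_eq_lintegral_of_nonneg_ae
        ((ae_restrict_mem hDm).mono fun y hy => Real.rpow_nonneg (le_of_lt hy.1) _) (by fun_prop),
        heq, ENNReal.toReal_mul, ENNReal.toReal_ofReal (by positivity), Measure.real]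
    have hphase : ∫ y in Ioi (0:ℝ) \ {x₀}, S x y ∂ν
        = ∫ y in Ioi (0:ℝ) \ {x₀},
          y ^ α * -(b * Real.sin (θ * (Real.log x - Real.log x₀))) ∂ν := by
      refine integral_congr_ae ?_
      have hl : ∀ᵐ y ∂ν, ¬ (y ≠ x₀ ∧ ∀ k : ℤ,
          Real.log y - Real.log x₀ ≠ d * (2 * k + 1)) := by
        rw [ae_iff]
        simpa only [not_not] using hlat
      filter_upwards [ae_restrict_mem hDm, ae_restrict_of_ae hl] with y hy hyl
      push Not at hyl
      obtain ⟨k, hk⟩ := hyl hy.2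
      have harg : θ * (Real.log x - Real.log y)
          = θ * (Real.log x - Real.log x₀) - Real.pi - k * (2 * Real.pi) := by
        have : θ * (d * (2 * k + 1)) = Real.pi * (2 * k + 1) := by
          rw [hθdef]
          field_simp
        rw [← hk] at this
        linarith
      simp only [hS]
      rw [harg, Real.sin_sub_int_mul_two_pi, Real.sin_sub_pi]
      ring
    rw [← integral_add_compl (measurableSet_singleton x₀) (hSint x), integral_singleton,
      setIntegral_congr_set hae, hphase, integral_mul_const, hmass]
    simp only [hS, smul_eq_mul]
    ring
  set κ := ∫ y, y ^ α ∂ν with hκ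
  have hκ0 : 0 < κ := by
    rw [hκ, integral_pos_iff_support_of_nonneg_ae (hpos.mono fun y hy => by
      simpa using Real.rpow_nonneg hy.le α) hαint]
    have : ν (Function.support fun y : ℝ => y ^ α) = 1 := by
      rw [← prob_compl_eq_zero_iff (measurableSet_support (by fun_prop))]
      refine measure_mono_null (fun y hy => ?_) hsupp
      by_contra hcon
      exact hy (Real.rpow_pos_of_pos (not_le.1 hcon) α).ne'
    rw [this]
    exact one_pos
  have hHm : Measurable H := (antitone_measureReal_Ioi μ).measurable
  have hform : ∀ x, 0 < x → ∀ y, 0 < y → y ≤ x → x ^ α * H (x / y) = y ^ α + S x y := by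
    intro x hx y hy hyx
    have h1 : 1 ≤ x / y := (one_le_div hy).2 hyx
    simp only [hH, hS]
    rw [hμ1 _ h1, Real.log_div hx.ne' hy.ne', Real.div_rpow hx.le hy.le, Real.rpow_neg hx.le,
      Real.rpow_neg hy.le]
    have := (Real.rpow_pos_of_pos hx α).ne'
    have := (Real.rpow_pos_of_pos hy α).ne'
    field_simp
  -- Subtracting `S x`, which integrates to zero, leaves exactly `y ^ α` as soon as `y ≤ x`.
  have hlimK : Tendsto (fun x => x ^ α * K x) atTop (𝓝 κ) := by
    have h1 := tendsto_integral_filter_of_dominated_convergence (μ := ν) (l := atTop)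
      (F := fun x y => x ^ α * H (x / y) - S x y) (f := fun y => y ^ α) (fun y => 2 * y ^ α)
      (Eventually.of_forall fun x => (((hHm.comp (measurable_const.div
        measurable_id)).const_mul _).sub (hSm x)).aestronglyMeasurable) ?_
      (hαint.const_mul 2) ?_
    · refine h1.congr fun x => ?_
      have hHint : Integrable (fun y => H (x / y)) ν :=
        Integrable.of_bound (hHm.comp (measurable_const.div measurable_id)).aestronglyMeasurable 1
          (ae_of_all _ fun y => by
            rw [Real.norm_eq_abs, abs_of_nonneg measureReal_nonneg]
            exact measureReal_le_one)
      rw [integral_sub (hHint.const_mul _) (hSint x), hSzero, sub_zero, integral_const_mul, hKH]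
    · filter_upwards [eventually_gt_atTop 0] with x hx
      filter_upwards [hpos] with y hy
      have hyα : 0 < y ^ α := by positivity
      rcases le_or_gt y x with hyx | hyx
      · rw [hform x hx y hy hyx, add_sub_cancel_right, Real.norm_eq_abs, abs_of_pos hyα]
        linarith
      · have h2 : H (x / y) = 1 := hμ2 _ ((div_le_one hy).2 hyx.le)
        have h3 : x ^ α ≤ y ^ α := by gcongr
        have h4 : 0 < x ^ α := by positivity
        have h5 := abs_le.1 (hSb x y hy)
        rw [h2, Real.norm_eq_abs, abs_le]
        constructor <;> linarith [h5.1, h5.2]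
    · filter_upwards [hpos] with y hy
      refine tendsto_const_nhds.congr' ?_
      filter_upwards [eventually_gt_atTop 0, eventually_ge_atTop y] with x hx hyx
      rw [hform x hx y hy hyx, add_sub_cancel_right]
  refine (hasRegVarTail_iff _ α).2 ⟨fun x => ?_, fun c hc => ?_⟩
  · obtain ⟨y, ⟨hy, hy0⟩, hxy⟩ := (((hlimK.eventually (lt_mem_nhds hκ0)).and
      (eventually_gt_atTop 0)).and (eventually_ge_atTop x)).exists
    refine lt_of_lt_of_le ?_ (antitone_measureReal_Ioi _ hxy)
    exact (mul_pos_iff_of_pos_left (Real.rpow_pos_of_pos hy0 α)).1 hy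
  · have h1 := ((hlimK.comp (tendsto_id.const_mul_atTop hc)).div hlimK hκ0.ne').const_mul
      (c ^ (-α))
    rw [div_self hκ0.ne', mul_one] at h1
    refine h1.congr' ?_
    filter_upwards [eventually_gt_atTop 0] with x hx
    simp only [Function.comp, id, Pi.div_apply]
    change c ^ (-α) * ((c * x) ^ α * K (c * x) / (x ^ α * K x)) = K (c * x) / K x
    rw [Real.mul_rpow hc.le hx.le, Real.rpow_neg hc.le]
    have := (Real.rpow_pos_of_pos hx α).ne'
    have := (Real.rpow_pos_of_pos hc α).ne'
    field_simp

/-- Corollary 4.9(ii). Let `Y` be a positive random variable with law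
`ν`, `E Y^{α+δ} < ∞` for some `δ > 0`, `P(Y = x₀) > 0` for some `x₀ > 0`, and suppose
`E[Y^α 1(Y ≠ x₀)] = x₀^α P(Y = x₀)`. Then `Y` fails to be `α`-regular variation
determining iff there is `θ₀ > 0` such that, conditionally on `Y ≠ x₀`,
`log Y − log x₀` almost surely lies in `{2πθ₀(2k+1) : k ∈ ℤ}`. -/
theorem not_rvDetRV_iff_odd_lattice
    (α : ℝ) (hα : 0 < α) (ν : Measure ℝ) [IsProbabilityMeasure ν] (hsupp : ν (Iic 0) = 0)
    (hmom : ∃ δ : ℝ, 0 < δ ∧ ∫⁻ y in Ioi (0:ℝ), ENNReal.ofReal (y ^ (α + δ)) ∂ν < ⊤)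
    (x₀ : ℝ) (hx₀ : 0 < x₀) (hatom : 0 < ν {x₀})
    (heq : ∫⁻ y in Ioi (0:ℝ) \ {x₀}, ENNReal.ofReal (y ^ α) ∂ν
        = ν {x₀} * ENNReal.ofReal (x₀ ^ α)) :
    ¬ RVDetRV α ν ↔ ∃ θ₀ : ℝ, 0 < θ₀ ∧
      ν {y : ℝ | y ≠ x₀ ∧ ∀ k : ℤ,
        Real.log y - Real.log x₀ ≠ 2 * Real.pi * θ₀ * (2 * k + 1)} = 0 := by
  constructor
  · intro hnot
    by_contra! hlat
    refine hnot (rvDetRV_of_not_odd_lattice α hα ν hsupp hmom x₀ hx₀ hatom heq fun d hd => ?_)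
    have h := hlat (d / (2 * Real.pi)) (by positivity)
    rwa [mul_div_cancel₀ d (by positivity : 2 * Real.pi ≠ 0)] at h
  · rintro ⟨θ₀, hθ₀, hlat⟩
    exact not_rvDetRV_of_odd_lattice α hα ν hsupp hmom x₀ hx₀ heq (2 * Real.pi * θ₀)
      (by positivity) hlat
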